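/- Let K be a quantum symmetric kernel of order r with θ := Tr(ρ^{⊗r} K), first Hoeffding projection K_1 := Tr_{2,...,r}[ (1 ⊗ ρ^{⊗(r−1)}) K ] − θ·1 ∈ M(ℂ^d), and ξ_1 := Tr(ρ K_1²). Assume K_1 ≠ 0. Then for every p ∈ ℕ, lim_{n→∞} Tr( ρ^{⊗n} ( √n (U_n − θ·1) )^p ) equals the p-th moment of the centered Gaussian law with variance r² ξ_1, i.e. (r² ξ_1)^{p/2} (p−1)!! for p even and 0 for p odd. -/

import Mathlib

open scoped BigOperators
open Matrix Filter Topology MeasureTheory ProbabilityTheory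
open scoped ComplexOrder

/-- The tensor product of a family of `d × d` matrices, as a matrix indexed by
multi-indices `Fin n → Fin d`. -/
noncomputable def tensorFam {d n : ℕ} (M : Fin n → Matrix (Fin d) (Fin d) ℂ) :
    Matrix (Fin n → Fin d) (Fin n → Fin d) ℂ :=
  Matrix.of fun x y => ∏ i, M i (x i) (y i)

/-- The ampliation `K^{(β)}` of a kernel `K` of order `r` to `(ℂ^d)^{⊗n}`. -/
noncomputable def ampl {d r n : ℕ} (K : Matrix (Fin r → Fin d) (Fin r → Fin d) ℂ)
    (β : Finset (Fin n)) (hβ : β.card = r) :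
    Matrix (Fin n → Fin d) (Fin n → Fin d) ℂ :=
  Matrix.of fun x y =>
    K (fun i => x ((β.orderIsoOfFin hβ i : Fin n)))
        (fun i => y ((β.orderIsoOfFin hβ i : Fin n))) *
      ∏ j ∈ βᶜ, if x j = y j then (1 : ℂ) else 0

/-- The quantum U-statistic `U_n = C(n,r)⁻¹ Σ_β K^{(β)}`. -/
noncomputable def qUstat {d r : ℕ} (K : Matrix (Fin r → Fin d) (Fin r → Fin d) ℂ)
    (n : ℕ) : Matrix (Fin n → Fin d) (Fin n → Fin d) ℂ :=
  (n.choose r : ℂ)⁻¹ •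
    ∑ β ∈ (Finset.powersetCard r (Finset.univ : Finset (Fin n))).attach,
      ampl K β.1 (Finset.mem_powersetCard.mp β.2).2

/-- The partial trace over the tensor slots `2, ..., r` of an operator on `(ℂ^d)^{⊗r}`
(keeping the first slot). -/
noncomputable def ptrRest {d r : ℕ} (hr : 0 < r)
    (N : Matrix (Fin r → Fin d) (Fin r → Fin d) ℂ) : Matrix (Fin d) (Fin d) ℂ :=
  Matrix.of fun a b =>
    ∑ g : Fin r → Fin d,
      if g ⟨0, hr⟩ = a then N g (Function.update g ⟨0, hr⟩ b) else 0

/-- The first Hoeffding projection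
`K₁ := Tr_{2,...,r}[(1 ⊗ ρ^{⊗(r−1)}) K] − θ·1` of a kernel of order `r`. -/
noncomputable def firstHoef {d r : ℕ} (hr : 0 < r) (ρ : Matrix (Fin d) (Fin d) ℂ)
    (K : Matrix (Fin r → Fin d) (Fin r → Fin d) ℂ) : Matrix (Fin d) (Fin d) ℂ :=
  ptrRest hr ((tensorFam fun j : Fin r => if j = ⟨0, hr⟩ then 1 else ρ) * K) -
    ((tensorFam fun _ : Fin r => ρ) * K).trace • (1 : Matrix (Fin d) (Fin d) ℂ)

section Tensor

variable {d n r : ℕ}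

lemma tensorFam_one : tensorFam (fun _ : Fin n => (1 : Matrix (Fin d) (Fin d) ℂ)) = 1 := by
  ext x y
  simp [tensorFam, Matrix.one_apply, Finset.prod_ite_zero, funext_iff]

lemma tensorFam_mul (M N : Fin n → Matrix (Fin d) (Fin d) ℂ) :
    tensorFam M * tensorFam N = tensorFam fun i => M i * N i := by
  ext x y
  simp only [tensorFam, Matrix.mul_apply, Matrix.of_apply, ← Finset.prod_mul_distrib]
  rw [Finset.prod_univ_sum, Fintype.piFinset_univ]

lemma trace_tensorFam (M : Fin n → Matrix (Fin d) (Fin d) ℂ) :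
    (tensorFam M).trace = ∏ i, (M i).trace := by
  simp only [tensorFam, Matrix.trace, Matrix.diag_apply, Matrix.of_apply]
  rw [Finset.prod_univ_sum, Fintype.piFinset_univ]

lemma tensorFam_single (u v : Fin r → Fin d) :
    tensorFam (fun j => Matrix.single (u j) (v j) (1 : ℂ)) = Matrix.single u v 1 := by
  ext x y
  simp [tensorFam, Matrix.single_apply, Finset.prod_ite_zero, funext_iff, forall_and]

/-- Every operator on a tensor power is a combination of elementary tensors. -/
lemma eq_sum_tensorFam (M : Matrix (Fin r → Fin d) (Fin r → Fin d) ℂ) :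
    M = ∑ uv : (Fin r → Fin d) × (Fin r → Fin d),
      M uv.1 uv.2 • tensorFam fun j => Matrix.single (uv.1 j) (uv.2 j) (1 : ℂ) := by
  rw [Fintype.sum_prod_type]
  conv_lhs => rw [Matrix.matrix_eq_sum_single M]
  simp [tensorFam_single, Matrix.smul_single]

/-- `ampl` as a linear map in the kernel. -/
noncomputable def amplLin (d : ℕ) (β : Finset (Fin n)) (hβ : β.card = r) :
    Matrix (Fin r → Fin d) (Fin r → Fin d) ℂ →ₗ[ℂ] Matrix (Fin n → Fin d) (Fin n → Fin d) ℂ where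
  toFun K := ampl K β hβ
  map_add' K L := by ext x y; simp [ampl, add_mul]
  map_smul' c K := by ext x y; simp [ampl, mul_assoc]

lemma amplLin_apply (β : Finset (Fin n)) (hβ : β.card = r)
    (K : Matrix (Fin r → Fin d) (Fin r → Fin d) ℂ) : amplLin d β hβ K = ampl K β hβ := rfl

/-- Extension of a family of matrices on the slots in `β` by the identity. -/
noncomputable def extFam (β : Finset (Fin n)) (hβ : β.card = r)
    (m : Fin r → Matrix (Fin d) (Fin d) ℂ) (i : Fin n) : Matrix (Fin d) (Fin d) ℂ :=
  if h : i ∈ β then m ((β.orderIsoOfFin hβ).symm ⟨i, h⟩) else 1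

lemma extFam_orderEmb (β : Finset (Fin n)) (hβ : β.card = r)
    (m : Fin r → Matrix (Fin d) (Fin d) ℂ) (j : Fin r) :
    extFam β hβ m (β.orderEmbOfFin hβ j) = m j := by
  have h : β.orderEmbOfFin hβ j ∈ β := β.orderEmbOfFin_mem hβ j
  have : (⟨β.orderEmbOfFin hβ j, h⟩ : β) = β.orderIsoOfFin hβ j := Subtype.ext (by simp)
  simp [extFam, h, this]

lemma extFam_of_notMem (β : Finset (Fin n)) (hβ : β.card = r)
    (m : Fin r → Matrix (Fin d) (Fin d) ℂ) {i : Fin n} (hi : i ∉ β) :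
    extFam β hβ m i = 1 := by
  simp [extFam, hi]

lemma prod_orderEmb_mul_prod_compl {R : Type*} [CommMonoid R] (β : Finset (Fin n))
    (hβ : β.card = r) (f : Fin n → R) :
    (∏ j, f (β.orderEmbOfFin hβ j)) * ∏ i ∈ βᶜ, f i = ∏ i, f i := by
  rw [← Finset.prod_mul_prod_compl β f]
  congr 1
  conv_rhs => rw [← Finset.image_orderEmbOfFin_univ β hβ]
  rw [Finset.prod_image (β.orderEmbOfFin hβ).injective.injOn]

lemma ampl_tensorFam (β : Finset (Fin n)) (hβ : β.card = r)
    (m : Fin r → Matrix (Fin d) (Fin d) ℂ) :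
    ampl (tensorFam m) β hβ = tensorFam (extFam β hβ m) := by
  ext x y
  simp only [ampl, tensorFam, Matrix.of_apply, Finset.coe_orderIsoOfFin_apply]
  rw [← prod_orderEmb_mul_prod_compl β hβ]
  congr 1
  · simp [extFam_orderEmb]
  · refine Finset.prod_congr rfl fun i hi => ?_
    rw [extFam_of_notMem β hβ m (by simpa using hi), Matrix.one_apply]

lemma ampl_eq_sum (β : Finset (Fin n)) (hβ : β.card = r)
    (M : Matrix (Fin r → Fin d) (Fin r → Fin d) ℂ) :
    ampl M β hβ = ∑ uv : (Fin r → Fin d) × (Fin r → Fin d),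
      M uv.1 uv.2 •
        tensorFam (extFam β hβ fun j => Matrix.single (uv.1 j) (uv.2 j) (1 : ℂ)) := by
  conv_lhs => rw [eq_sum_tensorFam M, ← amplLin_apply, map_sum]
  simp [amplLin_apply, ampl_tensorFam]

lemma ampl_one (β : Finset (Fin n)) (hβ : β.card = r) :
    ampl (1 : Matrix (Fin r → Fin d) (Fin r → Fin d) ℂ) β hβ = 1 := by
  rw [← tensorFam_one, ampl_tensorFam, ← tensorFam_one]
  congr 1
  ext1 i
  simp [extFam]

/-- The trace of an ampliation against an elementary tensor factorizes. -/
lemma trace_tensorFam_mul_ampl (β : Finset (Fin n)) (hβ : β.card = r)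
    (N : Fin n → Matrix (Fin d) (Fin d) ℂ) (M : Matrix (Fin r → Fin d) (Fin r → Fin d) ℂ) :
    (tensorFam N * ampl M β hβ).trace =
      (tensorFam (fun j => N (β.orderEmbOfFin hβ j)) * M).trace * ∏ i ∈ βᶜ, (N i).trace := by
  conv_rhs => rw [eq_sum_tensorFam M]
  rw [ampl_eq_sum]
  simp only [Matrix.mul_sum, Matrix.trace_sum, Matrix.mul_smul, Matrix.trace_smul, tensorFam_mul,
    trace_tensorFam, Finset.sum_mul, smul_eq_mul, mul_assoc]
  refine Finset.sum_congr rfl fun uv _ => ?_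
  rw [← prod_orderEmb_mul_prod_compl β hβ]
  congr 2
  · simp [extFam_orderEmb]
  · refine Finset.prod_congr rfl fun i hi => ?_
    rw [extFam_of_notMem _ _ _ (by simpa using hi), mul_one]

end Tensor

section Words

variable {d n r p : ℕ} {ρ : Matrix (Fin d) (Fin d) ℂ}

/-- The kernel `M` is degenerate of order `q`: its partial traces against `ρ` over all the slots
outside a set of fewer than `q` slots vanish. -/
def IsDegenerate (ρ : Matrix (Fin d) (Fin d) ℂ) (q : ℕ)
    (M : Matrix (Fin r → Fin d) (Fin r → Fin d) ℂ) : Prop :=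
  ∀ J : Finset (Fin r), J.card < q → ∀ N : Fin r → Matrix (Fin d) (Fin d) ℂ,
    (∀ j ∉ J, N j = ρ) → (tensorFam N * M).trace = 0

/-- The operators acting as the identity on the slots in `P`. -/
def trivialOn (d : ℕ) (P : Finset (Fin n)) :
    Submodule ℂ (Matrix (Fin n → Fin d) (Fin n → Fin d) ℂ) :=
  Submodule.span ℂ {W | ∃ w : Fin n → Matrix (Fin d) (Fin d) ℂ,
    (∀ i ∈ P, w i = 1) ∧ tensorFam w = W}

lemma one_mem_trivialOn (P : Finset (Fin n)) : 1 ∈ trivialOn d P :=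
  Submodule.subset_span ⟨fun _ => 1, fun _ _ => rfl, tensorFam_one⟩

lemma mul_mem_trivialOn {P : Finset (Fin n)} {V W : Matrix (Fin n → Fin d) (Fin n → Fin d) ℂ}
    (hV : V ∈ trivialOn d P) (hW : W ∈ trivialOn d P) : V * W ∈ trivialOn d P := by
  have h := Submodule.mul_mem_mul hV hW
  rw [trivialOn, Submodule.span_mul_span] at h
  refine Submodule.span_mono ?_ h
  rintro _ ⟨_, ⟨v, hv, rfl⟩, _, ⟨w, hw, rfl⟩, rfl⟩
  exact ⟨fun i => v i * w i, fun i hi => by simp [hv i hi, hw i hi], (tensorFam_mul v w).symm⟩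

lemma list_prod_mem_trivialOn {P : Finset (Fin n)}
    {l : List (Matrix (Fin n → Fin d) (Fin n → Fin d) ℂ)} (hl : ∀ W ∈ l, W ∈ trivialOn d P) :
    l.prod ∈ trivialOn d P := by
  induction l with
  | nil => simpa using one_mem_trivialOn P
  | cons W l ih =>
    rw [List.prod_cons]
    exact mul_mem_trivialOn (hl W (by simp)) (ih fun V hV => hl V (by simp [hV]))

lemma ampl_mem_trivialOn {P β : Finset (Fin n)} (hβ : β.card = r)
    (M : Matrix (Fin r → Fin d) (Fin r → Fin d) ℂ) (h : ∀ i ∈ P, i ∉ β) :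
    ampl M β hβ ∈ trivialOn d P := by
  rw [ampl_eq_sum]
  refine Submodule.sum_mem _ fun uv _ => Submodule.smul_mem _ _ (Submodule.subset_span ?_)
  exact ⟨_, fun i hi => extFam_of_notMem β hβ _ (h i hi), rfl⟩

lemma trace_mul_ampl_mul_eq_zero {P β : Finset (Fin n)} {hβ : β.card = r} {q : ℕ}
    {M : Matrix (Fin r → Fin d) (Fin r → Fin d) ℂ} (hM : IsDegenerate ρ q M)
    {J : Finset (Fin r)} (hJ : J.card < q) (hP : ∀ j ∉ J, β.orderEmbOfFin hβ j ∈ P)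
    {V W : Matrix (Fin n → Fin d) (Fin n → Fin d) ℂ}
    (hV : V ∈ trivialOn d P) (hW : W ∈ trivialOn d P) :
    ((tensorFam fun _ : Fin n => ρ) * (V * ampl M β hβ * W)).trace = 0 := by
  induction hV using Submodule.span_induction with
  | zero => simp
  | add V V' _ _ h h' => simp only [add_mul, mul_add, Matrix.trace_add, h, h', add_zero]
  | smul c V _ h => simp only [Matrix.smul_mul, Matrix.mul_smul, Matrix.trace_smul, h, smul_zero]
  | mem V hV =>
    obtain ⟨v, hv, rfl⟩ := hV
    induction hW using Submodule.span_induction with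
    | zero => simp
    | add W W' _ _ h h' => simp only [mul_add, Matrix.trace_add, h, h', add_zero]
    | smul c W _ h => simp only [Matrix.mul_smul, Matrix.trace_smul, h, smul_zero]
    | mem W hW =>
      obtain ⟨w, hw, rfl⟩ := hW
      rw [Matrix.trace_mul_comm, mul_assoc, mul_assoc, Matrix.trace_mul_comm, mul_assoc,
        Matrix.trace_mul_comm, tensorFam_mul, tensorFam_mul, trace_tensorFam_mul_ampl, hM J hJ,
        zero_mul]
      intro j hj
      simp [hv _ (hP j hj), hw _ (hP j hj)]

/-- A word vanishes in the product state as soon as fewer than `q` of the slots of one of its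
letters, degenerate of order `q`, are shared with other letters. -/
lemma trace_word_eq_zero (M : Fin p → Matrix (Fin r → Fin d) (Fin r → Fin d) ℂ)
    (β : Fin p → Finset (Fin n)) (hβ : ∀ a, (β a).card = r) (a : Fin p) {q : ℕ}
    (hM : IsDegenerate ρ q (M a)) (J : Finset (Fin r)) (hJ : J.card < q)
    (hP : ∀ j ∉ J, ∀ b ≠ a, (β a).orderEmbOfFin (hβ a) j ∉ β b) :
    ((tensorFam fun _ : Fin n => ρ) *
      (List.ofFn fun b => ampl (M b) (β b) (hβ b)).prod).trace = 0 := by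
  set l := List.ofFn fun b => ampl (M b) (β b) (hβ b) with hl
  have ha : (a : ℕ) < l.length := by simp [hl]
  have hsplit : l.prod = (l.take a).prod * ampl (M a) (β a) (hβ a) * (l.drop (a + 1)).prod := by
    conv_lhs => rw [← List.take_append_drop (a : ℕ) l, List.drop_eq_getElem_cons ha]
    simp [hl, mul_assoc]
  have hmem : ∀ b ≠ a, ampl (M b) (β b) (hβ b) ∈
      trivialOn d (Jᶜ.image fun j => (β a).orderEmbOfFin (hβ a) j) := by
    intro b hb
    refine ampl_mem_trivialOn _ _ fun i hi => ?_
    obtain ⟨j, hj, rfl⟩ := Finset.mem_image.1 hi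
    exact hP j (by simpa using hj) b hb
  rw [hsplit]
  refine trace_mul_ampl_mul_eq_zero hM hJ
    (P := Jᶜ.image fun j => (β a).orderEmbOfFin (hβ a) j)
    (fun j hj => Finset.mem_image_of_mem _ (Finset.mem_compl.2 hj))
    (list_prod_mem_trivialOn ?_) (list_prod_mem_trivialOn ?_)
  · intro W hW
    obtain ⟨k, hk, rfl⟩ := List.mem_take_iff_getElem.1 hW
    simp only [hl, List.getElem_ofFn]
    refine hmem _ (Fin.ne_of_val_ne ?_)
    simp only
    omega
  · intro W hW
    obtain ⟨k, hk, rfl⟩ := List.mem_drop_iff_getElem.1 hW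
    simp only [hl, List.getElem_ofFn]
    refine hmem _ (Fin.ne_of_val_ne ?_)
    simp only
    omega

lemma list_prod_ofFn_tensorFam (w : Fin p → Fin n → Matrix (Fin d) (Fin d) ℂ) :
    (List.ofFn fun a => tensorFam (w a)).prod =
      tensorFam fun i => (List.ofFn fun a => w a i).prod := by
  induction p with
  | zero => simp [tensorFam_one]
  | succ p ih => simp only [List.ofFn_succ, List.prod_cons, ih, tensorFam_mul]

lemma list_prod_ofFn_sum {A ι : Type*} [Ring A] [Algebra ℂ A] [Fintype ι]
    (c : Fin p → ι → ℂ) (x : Fin p → ι → A) :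
    (List.ofFn fun a => ∑ k, c a k • x a k).prod =
      ∑ κ : Fin p → ι, (∏ a, c a (κ a)) • (List.ofFn fun a => x a (κ a)).prod := by
  classical
  simp only [← MultilinearMap.mkPiAlgebraFin_apply (R := ℂ)]
  rw [MultilinearMap.map_sum]
  simp only [MultilinearMap.map_smul_univ]

lemma exists_norm_trace_word_le (hρ : ρ.trace = 1)
    (M : Fin p → Matrix (Fin r → Fin d) (Fin r → Fin d) ℂ) :
    ∃ C : ℝ, 0 ≤ C ∧ ∀ (n : ℕ) (β : Fin p → Finset (Fin n)) (hβ : ∀ a, (β a).card = r),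
      ‖((tensorFam fun _ : Fin n => ρ) *
        (List.ofFn fun b => ampl (M b) (β b) (hβ b)).prod).trace‖ ≤ C := by
  classical
  let unit : Option (Fin d × Fin d) → Matrix (Fin d) (Fin d) ℂ := fun o =>
    o.elim 1 fun uv => Matrix.single uv.1 uv.2 1
  set c : ℝ := 1 + ∑ o : Fin p → Option (Fin d × Fin d),
    ‖(ρ * (List.ofFn fun a => unit (o a)).prod).trace‖ with hc
  have hc1 : 1 ≤ c := by
    rw [hc]; linarith [Finset.sum_nonneg fun (o : Fin p → Option (Fin d × Fin d))
      (_ : o ∈ Finset.univ) => norm_nonneg (ρ * (List.ofFn fun a => unit (o a)).prod).trace]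
  have hle : ∀ o : Fin p → Option (Fin d × Fin d),
      ‖(ρ * (List.ofFn fun a => unit (o a)).prod).trace‖ ≤ c := fun o => by
    have := Finset.single_le_sum (f := fun o : Fin p → Option (Fin d × Fin d) =>
      ‖(ρ * (List.ofFn fun a => unit (o a)).prod).trace‖) (fun _ _ => norm_nonneg _)
      (Finset.mem_univ o)
    rw [hc]; linarith
  refine ⟨∑ κ : Fin p → (Fin r → Fin d) × (Fin r → Fin d),
    ‖∏ a, M a (κ a).1 (κ a).2‖ * c ^ (p * r), by positivity, fun n β hβ => ?_⟩
  simp only [ampl_eq_sum]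
  rw [list_prod_ofFn_sum, Matrix.mul_sum, Matrix.trace_sum]
  refine (norm_sum_le _ _).trans (Finset.sum_le_sum fun κ _ => ?_)
  rw [Matrix.mul_smul, Matrix.trace_smul, smul_eq_mul, norm_mul]
  refine mul_le_mul_of_nonneg_left ?_ (norm_nonneg _)
  rw [list_prod_ofFn_tensorFam, tensorFam_mul, trace_tensorFam, norm_prod]
  set U : Finset (Fin n) := Finset.univ.biUnion β
  have hU : U.card ≤ p * r := by
    refine Finset.card_biUnion_le.trans ?_
    simp [hβ]
  rw [← Finset.prod_mul_prod_compl U]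
  have h2 : ∀ i ∈ Uᶜ, ‖(ρ * (List.ofFn fun a => extFam (β a) (hβ a)
      (fun j => Matrix.single ((κ a).1 j) ((κ a).2 j) (1 : ℂ)) i).prod).trace‖ = 1 := by
    intro i hi
    have hi' : ∀ a, i ∉ β a := by simpa [U] using hi
    simp [extFam_of_notMem _ _ _ (hi' _), List.ofFn_const, hρ]
  rw [Finset.prod_congr rfl h2, Finset.prod_const_one, mul_one]
  refine le_trans ?_ (pow_le_pow_right₀ hc1 hU)
  rw [← Finset.prod_const]
  refine Finset.prod_le_prod (fun _ _ => norm_nonneg _) fun i _ => ?_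
  have : ∀ a, ∃ o : Option (Fin d × Fin d), extFam (β a) (hβ a)
      (fun j => Matrix.single ((κ a).1 j) ((κ a).2 j) (1 : ℂ)) i = unit o := by
    intro a
    by_cases h : i ∈ β a
    · exact ⟨some (_, _), by simp only [extFam, h, dite_true, unit, Option.elim]; rfl⟩
    · exact ⟨none, by simp [extFam, h, unit]⟩
  choose o ho using this
  simp only [ho]
  exact hle o

end Words

section Counting

lemma card_image_le_le_mul_pow {ι : Type*} [Fintype ι] [DecidableEq ι] (m n : ℕ) (hn : 0 < n) :
    (Finset.univ.filter fun g : ι → Fin n => (Finset.univ.image g).card ≤ m).card ≤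
      m ^ Fintype.card ι * n ^ m := by
  have h : (Finset.univ.filter fun g : ι → Fin n => (Finset.univ.image g).card ≤ m) ⊆
      (Finset.univ : Finset ((ι → Fin m) × (Fin m → Fin n))).image fun fh => fh.2 ∘ fh.1 := by
    intro g hg
    obtain ⟨ψ⟩ := Function.Embedding.nonempty_of_card_le
      (α := (Finset.univ.image g : Finset (Fin n))) (β := Fin m)
      (by rw [Fintype.card_coe, Fintype.card_fin]; exact (Finset.mem_filter.1 hg).2)
    refine Finset.mem_image.2 ⟨(fun i => ψ ⟨g i, by simp⟩,
      Function.extend ψ Subtype.val fun _ => ⟨0, hn⟩), Finset.mem_univ _, ?_⟩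
    funext i
    simp [ψ.injective.extend_apply]
  refine (Finset.card_le_card h).trans (Finset.card_image_le.trans ?_)
  simp

lemma exists_card_small_image_le (ι : Type*) [Fintype ι] [DecidableEq ι] (t : ℕ) :
    ∃ C : ℝ, 0 ≤ C ∧ ∀ n : ℕ, 0 < n →
      ((Finset.univ.filter fun g : ι → Fin n =>
        2 * (Finset.univ.image g).card + t ≤ 2 * Fintype.card ι).card : ℝ) * √n ^ t ≤
      C * n ^ Fintype.card ι := by
  by_cases ht : t ≤ 2 * Fintype.card ι
  · set m := (2 * Fintype.card ι - t) / 2 with hm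
    refine ⟨(m : ℝ) ^ Fintype.card ι, by positivity, fun n hn => ?_⟩
    have hcard : (Finset.univ.filter fun g : ι → Fin n =>
        2 * (Finset.univ.image g).card + t ≤ 2 * Fintype.card ι).card ≤
        m ^ Fintype.card ι * n ^ m := by
      refine le_trans (Finset.card_le_card fun g hg => ?_) (card_image_le_le_mul_pow (ι := ι) m n hn)
      simp only [Finset.mem_filter, Finset.mem_univ, true_and] at hg ⊢
      omega
    have h1 : (1 : ℝ) ≤ √n := Real.one_le_sqrt.2 (by exact_mod_cast hn)
    have hs : ∀ k : ℕ, (n : ℝ) ^ k = √n ^ (2 * k) := fun k => by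
      rw [pow_mul, Real.sq_sqrt (Nat.cast_nonneg n)]
    calc _ ≤ ((m : ℝ) ^ Fintype.card ι * (n : ℝ) ^ m) * √n ^ t := by
          gcongr
          exact_mod_cast hcard
      _ = (m : ℝ) ^ Fintype.card ι * √n ^ (2 * m + t) := by rw [hs, pow_add, mul_assoc]
      _ ≤ (m : ℝ) ^ Fintype.card ι * √n ^ (2 * Fintype.card ι) := by
          gcongr ?_ * ?_
          exact pow_le_pow_right₀ h1 (by omega)
      _ = _ := by rw [hs]
  · refine ⟨0, le_rfl, fun n _ => ?_⟩
    rw [Finset.filter_false_of_mem (fun g _ => by omega)]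
    simp

/-- Slots of row `a` whose value is also taken in another row. -/
def sharedSlots {p r n : ℕ} (g : Fin p × Fin r → Fin n) (a : Fin p) : Finset (Fin r) :=
  Finset.univ.filter fun j => ∃ b, b ≠ a ∧ ∃ k, g (b, k) = g (a, j)

lemma two_mul_card_image_add_card_shared_le {p r n : ℕ} (g : Fin p × Fin r → Fin n) :
    2 * (Finset.univ.image g).card + ∑ a, (sharedSlots g a).card ≤ 2 * (p * r) := by
  classical
  have h1 : p * r = ∑ i ∈ Finset.univ.image g, (Finset.univ.filter fun x => g x = i).card := by
    rw [← Finset.card_eq_sum_card_image]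
    simp
  set S : Finset (Fin p × Fin r) := Finset.univ.filter fun x => x.2 ∈ sharedSlots g x.1 with hS
  have h2 : ∑ a, (sharedSlots g a).card = S.card := by
    rw [hS, Finset.card_filter, Fintype.sum_prod_type]
    refine Finset.sum_congr rfl fun a _ => ?_
    simp
  have h3 : S.card = ∑ i ∈ Finset.univ.image g, (S.filter fun x => g x = i).card :=
    Finset.card_eq_sum_card_fiberwise fun x _ => by simp
  rw [h2, h3, h1, Finset.card_eq_sum_ones, Finset.mul_sum, Finset.mul_sum,
    ← Finset.sum_add_distrib]
  refine Finset.sum_le_sum fun i hi => ?_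
  have hle : (S.filter fun x => g x = i).card ≤ (Finset.univ.filter fun x => g x = i).card :=
    Finset.card_le_card (Finset.filter_subset_filter _ (Finset.subset_univ _))
  have hpos : 0 < (Finset.univ.filter fun x => g x = i).card := by
    obtain ⟨x, -, hx⟩ := Finset.mem_image.1 hi
    exact Finset.card_pos.2 ⟨x, by simpa using hx⟩
  rcases Nat.lt_or_ge 1 (Finset.univ.filter fun x => g x = i).card with h | h
  · omega
  · have : S.filter (fun x => g x = i) = ∅ := by
      refine Finset.filter_eq_empty_iff.2 fun x hx hxi => ?_
      simp only [hS, sharedSlots, Finset.mem_filter, Finset.mem_univ, true_and] at hx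
      obtain ⟨b, hb, k, hk⟩ := hx
      have := Finset.card_le_one.1 h (b, k) (by simp [hk, hxi]) x (by simp [hxi])
      exact hb (congrArg Prod.fst this)
    rw [this]
    simp only [Finset.card_empty]
    omega

lemma tendsto_pow_div_choose (r : ℕ) :
    Tendsto (fun n : ℕ => (n : ℝ) ^ r / n.choose r) atTop (𝓝 r.factorial) := by
  have h := (isEquivalent_choose r).inv
  have h2 : Asymptotics.IsEquivalent atTop (fun n : ℕ => (n : ℝ) ^ r / n.choose r)
      fun n : ℕ => (n : ℝ) ^ r * ((n : ℝ) ^ r / r.factorial)⁻¹ := by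
    simp only [div_eq_mul_inv (_ ^ r) (Nat.cast (Nat.choose _ _))]
    exact Asymptotics.IsEquivalent.refl.mul h
  refine h2.symm.tendsto_nhds (tendsto_const_nhds.congr' ?_)
  filter_upwards [eventually_gt_atTop 0] with n hn
  have : (n : ℝ) ≠ 0 := by exact_mod_cast hn.ne'
  have : (r.factorial : ℝ) ≠ 0 := by positivity
  field_simp

end Counting

section WordLimit

variable {d r p : ℕ} {ρ : Matrix (Fin d) (Fin d) ℂ}

/-- The normalized sum `(√n / C(n,r)) Σ_β M^{(β)}`. -/
noncomputable def kernelSum (M : Matrix (Fin r → Fin d) (Fin r → Fin d) ℂ) (n : ℕ) :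
    Matrix (Fin n → Fin d) (Fin n → Fin d) ℂ :=
  ∑ β : {β // β ∈ Finset.powersetCard r (Finset.univ : Finset (Fin n))},
    ((√n / n.choose r : ℝ) : ℂ) • ampl M β.1 (Finset.mem_powersetCard.mp β.2).2

lemma card_nonvanishing_words_le {q : Fin p → ℕ} {t : ℕ} (hq : t ≤ ∑ a, q a)
    (M : Fin p → Matrix (Fin r → Fin d) (Fin r → Fin d) ℂ)
    (hM : ∀ a, IsDegenerate ρ (q a) (M a)) (n : ℕ) :
    (Finset.univ.filter fun β : Fin p →
        {β // β ∈ Finset.powersetCard r (Finset.univ : Finset (Fin n))} =>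
      ((tensorFam fun _ : Fin n => ρ) * (List.ofFn fun a =>
        ampl (M a) (β a).1 (Finset.mem_powersetCard.mp (β a).2).2).prod).trace ≠ 0).card ≤
    (Finset.univ.filter fun g : Fin p × Fin r → Fin n =>
        2 * (Finset.univ.image g).card + t ≤ 2 * Fintype.card (Fin p × Fin r)).card := by
  refine Finset.card_le_card_of_injOn
    (fun β x => (β x.1).1.orderEmbOfFin (Finset.mem_powersetCard.mp (β x.1).2).2 x.2) ?_ ?_
  · intro β hβ
    simp only [Finset.coe_filter, Finset.mem_univ, true_and, Set.mem_ofPred_eq] at hβ ⊢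
    set g : Fin p × Fin r → Fin n :=
      fun x => (β x.1).1.orderEmbOfFin (Finset.mem_powersetCard.mp (β x.1).2).2 x.2 with hg
    have h : ∀ a, q a ≤ (sharedSlots g a).card := by
      intro a
      by_contra! hlt
      refine hβ (trace_word_eq_zero M (fun a => (β a).1)
        (fun a => (Finset.mem_powersetCard.mp (β a).2).2) a (hM a) (sharedSlots g a) hlt ?_)
      intro j hj b hb hmem
      refine hj (Finset.mem_filter.2 ⟨Finset.mem_univ _, b, hb, ?_⟩)
      rw [← Finset.mem_coe, ← Finset.range_orderEmbOfFin (β b).1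
        (Finset.mem_powersetCard.mp (β b).2).2] at hmem
      exact hmem
    have h1 := Finset.sum_le_sum fun a (_ : a ∈ Finset.univ) => h a
    have h2 := two_mul_card_image_add_card_shared_le g
    simp only [Fintype.card_prod, Fintype.card_fin]
    omega
  · intro β _ γ _ h
    funext a
    refine Subtype.ext (Finset.coe_injective ?_)
    rw [← Finset.range_orderEmbOfFin (β a).1 (Finset.mem_powersetCard.mp (β a).2).2,
      ← Finset.range_orderEmbOfFin (γ a).1 (Finset.mem_powersetCard.mp (γ a).2).2]
    congr 1
    funext j
    exact congrFun h (a, j)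

/-- Words in normalized kernel sums whose total degeneracy exceeds their length vanish in the
limit. -/
lemma tendsto_trace_word_zero (hρ : ρ.trace = 1) {q : Fin p → ℕ} (hq : p + 1 ≤ ∑ a, q a)
    (M : Fin p → Matrix (Fin r → Fin d) (Fin r → Fin d) ℂ)
    (hM : ∀ a, IsDegenerate ρ (q a) (M a)) :
    Tendsto (fun n => ((tensorFam fun _ : Fin n => ρ) *
      (List.ofFn fun a => kernelSum (M a) n).prod).trace) atTop (𝓝 0) := by
  classical
  obtain ⟨C, hC, hCle⟩ := exists_norm_trace_word_le hρ M
  obtain ⟨D, hD, hDle⟩ := exists_card_small_image_le (Fin p × Fin r) (p + 1)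
  have hlim : Tendsto (fun n : ℕ => C * D * ((n : ℝ) ^ r / n.choose r) ^ p * (√n)⁻¹) atTop
      (𝓝 0) := by
    have h1 : Tendsto (fun n : ℕ => (√n)⁻¹) atTop (𝓝 0) :=
      (Real.tendsto_sqrt_atTop.comp tendsto_natCast_atTop_atTop).inv_tendsto_atTop
    simpa using (((tendsto_pow_div_choose r).pow p).const_mul (C * D)).mul h1
  refine squeeze_zero_norm' ?_ hlim
  filter_upwards [eventually_gt_atTop 0] with n hn
  have hs : 0 < √n := Real.sqrt_pos.2 (by exact_mod_cast hn)
  simp only [kernelSum]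
  rw [list_prod_ofFn_sum, Matrix.mul_sum, Matrix.trace_sum]
  simp only [Finset.prod_const, Finset.card_univ, Fintype.card_fin, Matrix.mul_smul,
    Matrix.trace_smul, smul_eq_mul]
  rw [← Finset.mul_sum, norm_mul, norm_pow, Complex.norm_real, Real.norm_of_nonneg (by positivity),
    ← Finset.sum_filter_ne_zero]
  set F := Finset.univ.filter fun g : Fin p × Fin r → Fin n =>
        2 * (Finset.univ.image g).card + (p + 1) ≤ 2 * Fintype.card (Fin p × Fin r) with hF
  have hDn : (F.card : ℝ) * √n ^ (p + 1) ≤ D * (n : ℝ) ^ (p * r) :=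
    (hDle n hn).trans_eq (by simp)
  calc _ ≤ (√n / n.choose r) ^ p * (F.card * C) := by
        refine mul_le_mul_of_nonneg_left ?_ (by positivity)
        refine (norm_sum_le_of_le _ fun β _ => hCle n (fun a => (β a).1) _).trans ?_
        rw [Finset.sum_const, nsmul_eq_mul]
        refine mul_le_mul_of_nonneg_right ?_ hC
        exact_mod_cast card_nonvanishing_words_le hq M hM n
    _ = C * (F.card * √n ^ (p + 1)) / (n.choose r : ℝ) ^ p * (√n)⁻¹ := by
        rw [div_pow, pow_succ]
        field_simp
    _ ≤ C * (D * (n : ℝ) ^ (p * r)) / (n.choose r : ℝ) ^ p * (√n)⁻¹ := by gcongr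
    _ = _ := by rw [div_pow, ← pow_mul, mul_comm r p]; ring

end WordLimit

section Linear

variable {d n : ℕ}

/-- The operator `k` acting on slot `i`. -/
noncomputable def site (i : Fin n) (k : Matrix (Fin d) (Fin d) ℂ) :
    Matrix (Fin n → Fin d) (Fin n → Fin d) ℂ :=
  tensorFam (Function.update (fun _ => 1) i k)

lemma tensorFam_mul_site (N : Fin n → Matrix (Fin d) (Fin d) ℂ) (i : Fin n)
    (k : Matrix (Fin d) (Fin d) ℂ) :
    tensorFam N * site i k = tensorFam (Function.update N i (N i * k)) := by
  rw [site, tensorFam_mul]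
  congr 1
  funext j
  rcases eq_or_ne j i with rfl | h <;> simp [*]

lemma tensorFam_mul_site_pow (N : Fin n → Matrix (Fin d) (Fin d) ℂ) (i : Fin n)
    (k : Matrix (Fin d) (Fin d) ℂ) (m : ℕ) :
    tensorFam N * site i k ^ m = tensorFam (Function.update N i (N i * k ^ m)) := by
  induction m with
  | zero => simp
  | succ m ih => rw [pow_succ, ← mul_assoc, ih, tensorFam_mul_site]; simp [pow_succ, mul_assoc]

lemma commute_site (i j : Fin n) (h : i ≠ j) (k : Matrix (Fin d) (Fin d) ℂ) :
    Commute (site i k) (site j k) := by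
  rw [Commute, SemiconjBy, site, site, tensorFam_mul, tensorFam_mul]
  congr 1
  funext l
  rcases eq_or_ne l i with rfl | hi
  · simp [h]
  · simp [hi]

/-- Exponential generating function of the moments of `k`, weighted by `N`. -/
noncomputable def momentSeries (k N : Matrix (Fin d) (Fin d) ℂ) : PowerSeries ℂ :=
  PowerSeries.mk fun q => (N * k ^ q).trace / q.factorial

lemma trace_tensorFam_mul_sum_site_pow (k : Matrix (Fin d) (Fin d) ℂ) (s : Finset (Fin n))
    (N : Fin n → Matrix (Fin d) (Fin d) ℂ) (p : ℕ) :
    (tensorFam N * (∑ i ∈ s, site i k) ^ p).trace = p.factorial * PowerSeries.coeff p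
      (∏ i, if i ∈ s then momentSeries k (N i) else PowerSeries.C (N i).trace) := by
  induction s using Finset.induction_on generalizing N p with
  | empty =>
    simp only [Finset.sum_empty, Finset.notMem_empty, if_false, ← map_prod, PowerSeries.coeff_C]
    rcases eq_or_ne p 0 with rfl | hp
    · simp [trace_tensorFam]
    · simp [hp]
  | insert a s ha ih =>
    have hcomm : Commute (site a k) (∑ i ∈ s, site i k) :=
      Commute.sum_right _ _ _ fun i hi => commute_site a i (by rintro rfl; exact ha hi) k
    set G := ∏ i ∈ Finset.univ.erase a,
      if i ∈ s then momentSeries k (N i) else PowerSeries.C (N i).trace with hG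
    have h1 : (∏ i, if i ∈ insert a s then momentSeries k (N i) else PowerSeries.C (N i).trace) =
        momentSeries k (N a) * G := by
      rw [← Finset.mul_prod_erase _ _ (Finset.mem_univ a), if_pos (Finset.mem_insert_self a s)]
      congr 1
      refine Finset.prod_congr rfl fun i hi => ?_
      simp [Finset.ne_of_mem_erase hi]
    have h2 : ∀ m, (∏ i, if i ∈ s then
          momentSeries k (Function.update N a (N a * k ^ m) i)
          else PowerSeries.C (Function.update N a (N a * k ^ m) i).trace) =
        PowerSeries.C (N a * k ^ m).trace * G := by
      intro m
      rw [← Finset.mul_prod_erase _ _ (Finset.mem_univ a), if_neg ha]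
      congr 1
      · simp
      · refine Finset.prod_congr rfl fun i hi => ?_
        simp [Finset.ne_of_mem_erase hi]
    rw [Finset.sum_insert ha, hcomm.add_pow, Matrix.mul_sum, Matrix.trace_sum, h1,
      PowerSeries.coeff_mul, Finset.Nat.sum_antidiagonal_eq_sum_range_succ_mk, Finset.mul_sum]
    refine Finset.sum_congr rfl fun m hm => ?_
    have hmp : m ≤ p := Nat.lt_succ_iff.1 (Finset.mem_range.1 hm)
    rw [← nsmul_eq_mul', Matrix.mul_smul, Matrix.trace_smul, ← mul_assoc, tensorFam_mul_site_pow,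
      ih, h2, PowerSeries.coeff_C_mul, momentSeries, PowerSeries.coeff_mk, nsmul_eq_mul,
      ← Nat.choose_mul_factorial_mul_factorial hmp]
    have : (m.factorial : ℂ) ≠ 0 := by exact_mod_cast m.factorial_ne_zero
    push_cast
    field_simp

lemma coeff_one_add_X_sq_mul_pow (H : PowerSeries ℂ) {n p : ℕ} (hp : p ≤ n) :
    PowerSeries.coeff p ((PowerSeries.X ^ 2 * H + 1) ^ n) =
      ∑ j ∈ Finset.range (p / 2 + 1), n.choose j * PowerSeries.coeff (p - 2 * j) (H ^ j) := by
  rw [add_pow, map_sum]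
  symm
  refine Finset.sum_subset_zero_on_sdiff (Finset.range_subset_range.2 (by omega)) ?_ ?_
  · intro j hj
    simp only [Finset.mem_sdiff, Finset.mem_range] at hj
    rw [one_pow, mul_one, mul_pow, ← pow_mul, ← nsmul_eq_mul', map_nsmul,
      PowerSeries.coeff_X_pow_mul', if_neg (by omega), smul_zero]
  · intro j hj
    simp only [Finset.mem_range] at hj
    rw [one_pow, mul_one, mul_pow, ← pow_mul, ← nsmul_eq_mul', map_nsmul,
      PowerSeries.coeff_X_pow_mul', if_pos (by omega), nsmul_eq_mul]

lemma tendsto_choose_div_sqrt_pow {j p : ℕ} (hj : 2 * j ≤ p) :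
    Tendsto (fun n : ℕ => (n.choose j : ℝ) / √n ^ p) atTop
      (𝓝 (if 2 * j = p then (j.factorial : ℝ)⁻¹ else 0)) := by
  have h1 : Tendsto (fun n : ℕ => ((n : ℝ) ^ j / n.choose j)⁻¹) atTop (𝓝 (j.factorial : ℝ)⁻¹) :=
    (tendsto_pow_div_choose j).inv₀ (by positivity)
  have h2 : Tendsto (fun n : ℕ => (√n)⁻¹ ^ (p - 2 * j)) atTop
      (𝓝 (0 ^ (p - 2 * j))) :=
    (Real.tendsto_sqrt_atTop.comp tendsto_natCast_atTop_atTop).inv_tendsto_atTop.pow _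
  have h3 := h1.mul h2
  have h4 : (j.factorial : ℝ)⁻¹ * 0 ^ (p - 2 * j) =
      if 2 * j = p then (j.factorial : ℝ)⁻¹ else 0 := by
    split_ifs with h
    · simp [h]
    · rw [zero_pow (by omega), mul_zero]
  rw [h4] at h3
  refine h3.congr' ?_
  filter_upwards [eventually_gt_atTop 0] with n hn
  have hs : 0 < √n := Real.sqrt_pos.2 (by exact_mod_cast hn)
  have hn' : (n : ℝ) ^ j = √n ^ (2 * j) := by rw [pow_mul, Real.sq_sqrt (Nat.cast_nonneg n)]
  rw [inv_div, hn', inv_pow, ← div_eq_mul_inv, div_div, ← pow_add]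
  congr 3
  omega

lemma factorial_two_mul_eq (h : ℕ) :
    (2 * h).factorial = (2 * h - 1).doubleFactorial * (2 ^ h * h.factorial) := by
  rcases h with _ | h
  · simp
  · rw [← Nat.doubleFactorial_two_mul, show 2 * (h + 1) = (2 * h + 1) + 1 by ring,
      Nat.factorial_eq_mul_doubleFactorial, mul_comm]
    rfl

/-- Moment convergence for sums of independent copies of a centered observable. -/
lemma tendsto_trace_sum_site_pow {ρ k : Matrix (Fin d) (Fin d) ℂ} (hρ : ρ.trace = 1)
    (hk : (ρ * k).trace = 0) (p : ℕ) :
    Tendsto (fun n : ℕ => ((√n : ℝ) : ℂ)⁻¹ ^ p *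
      ((tensorFam fun _ : Fin n => ρ) * (∑ i, site i k) ^ p).trace) atTop
      (𝓝 (if Even p then (ρ * (k * k)).trace ^ (p / 2) * ((p - 1).doubleFactorial : ℂ)
        else 0)) := by
  set H : PowerSeries ℂ := PowerSeries.mk fun q =>
    (ρ * k ^ (q + 2)).trace / (q + 2).factorial with hH
  have hF : momentSeries k ρ = PowerSeries.X ^ 2 * H + 1 := by
    ext q
    rw [momentSeries, hH, PowerSeries.coeff_mk, map_add, PowerSeries.coeff_X_pow_mul',
      PowerSeries.coeff_one]
    rcases q with _ | _ | q
    · simp [hρ]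
    · simp [hk]
    · simp
  have hlim : Tendsto (fun n : ℕ => ∑ j ∈ Finset.range (p / 2 + 1),
      (((n.choose j : ℝ) / √n ^ p : ℝ) : ℂ) *
        (p.factorial * PowerSeries.coeff (p - 2 * j) (H ^ j))) atTop
      (𝓝 (∑ j ∈ Finset.range (p / 2 + 1), (((if 2 * j = p then (j.factorial : ℝ)⁻¹ else 0) : ℝ) : ℂ)
        * (p.factorial * PowerSeries.coeff (p - 2 * j) (H ^ j)))) := by
    refine tendsto_finsetSum _ fun j hj => ?_
    refine Tendsto.mul_const _ ((Complex.continuous_ofReal.tendsto _).comp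
      (tendsto_choose_div_sqrt_pow ?_))
    have := Finset.mem_range.1 hj
    omega
  have hval : (∑ j ∈ Finset.range (p / 2 + 1),
        (((if 2 * j = p then (j.factorial : ℝ)⁻¹ else 0) : ℝ) : ℂ)
        * (p.factorial * PowerSeries.coeff (p - 2 * j) (H ^ j))) =
      if Even p then (ρ * (k * k)).trace ^ (p / 2) * ((p - 1).doubleFactorial : ℂ) else 0 := by
    split_ifs with hp
    · obtain ⟨h, rfl⟩ := even_iff_two_dvd.1 hp
      rw [Finset.sum_eq_single h]
      · have h0 : PowerSeries.coeff 0 (H ^ h) = ((ρ * (k * k)).trace / 2) ^ h := by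
          rw [PowerSeries.coeff_zero_eq_constantCoeff_apply, map_pow,
            ← PowerSeries.coeff_zero_eq_constantCoeff_apply, hH, PowerSeries.coeff_mk]
          simp [pow_two]
        have hf : (h.factorial : ℂ) ≠ 0 := by exact_mod_cast h.factorial_ne_zero
        rw [Nat.sub_self, h0, if_pos rfl, factorial_two_mul_eq,
          Nat.mul_div_cancel_left _ two_pos, div_pow]
        push_cast
        field_simp
      · intro j _ hj
        rw [if_neg (by omega)]
        simp
      · intro hh
        exact absurd (Finset.mem_range.2 (by omega)) hh
    · refine Finset.sum_eq_zero fun j _ => ?_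
      rw [if_neg (by rintro rfl; exact hp (even_two_mul j))]
      simp
  rw [← hval]
  refine hlim.congr' ?_
  filter_upwards [eventually_ge_atTop p] with n hn
  rw [trace_tensorFam_mul_sum_site_pow]
  simp only [Finset.mem_univ, if_true, Finset.prod_const, Finset.card_univ, Fintype.card_fin]
  rw [hF, coeff_one_add_X_sq_mul_pow H hn, Finset.mul_sum, Finset.mul_sum]
  refine Finset.sum_congr rfl fun j _ => ?_
  push_cast
  rw [inv_pow]
  ring

end Linear

section Hoeffding

variable {d r : ℕ} {ρ : Matrix (Fin d) (Fin d) ℂ}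

lemma trace_tensorFam_mul (N : Fin r → Matrix (Fin d) (Fin d) ℂ)
    (K : Matrix (Fin r → Fin d) (Fin r → Fin d) ℂ) :
    (tensorFam N * K).trace = ∑ x, ∑ y, (∏ i, N i (x i) (y i)) * K y x := by
  simp [Matrix.trace, Matrix.mul_apply, tensorFam]

lemma trace_tensorFam_comp_perm_mul {K : Matrix (Fin r → Fin d) (Fin r → Fin d) ℂ}
    (hsym : ∀ (τ : Equiv.Perm (Fin r)) (x y : Fin r → Fin d), K (x ∘ τ) (y ∘ τ) = K x y)
    (N : Fin r → Matrix (Fin d) (Fin d) ℂ) (τ : Equiv.Perm (Fin r)) :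
    (tensorFam (N ∘ τ) * K).trace = (tensorFam N * K).trace := by
  rw [trace_tensorFam_mul, trace_tensorFam_mul]
  refine (Fintype.sum_equiv (Equiv.arrowCongr τ (Equiv.refl (Fin d))) _ _ fun x => ?_)
  refine (Fintype.sum_equiv (Equiv.arrowCongr τ (Equiv.refl (Fin d))) _ _ fun y => ?_)
  rw [← hsym τ (Equiv.arrowCongr τ (Equiv.refl (Fin d)) y)]
  congr 1
  · conv_rhs => rw [← Equiv.prod_comp τ]
    simp [Equiv.arrowCongr]
  · congr 1 <;> · funext i; simp [Equiv.arrowCongr]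

lemma trace_mul_ptrRest (hr : 0 < r) (c : Matrix (Fin d) (Fin d) ℂ)
    (N : Matrix (Fin r → Fin d) (Fin r → Fin d) ℂ) :
    (c * ptrRest hr N).trace = (site ⟨0, hr⟩ c * N).trace := by
  have key : ∀ y : Fin r → Fin d, (∑ x : Fin r → Fin d,
      (∏ i, Function.update (fun _ => (1 : Matrix (Fin d) (Fin d) ℂ)) ⟨0, hr⟩ c i (x i) (y i)) *
        N y x) = ∑ b, c b (y ⟨0, hr⟩) * N y (Function.update y ⟨0, hr⟩ b) := by
    intro y
    refine (Finset.sum_of_injOn (fun b => Function.update y ⟨0, hr⟩ b)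
      (Function.update_injective y _).injOn (by simp) ?_ ?_).symm
    · intro x _ hx
      have : ∃ i, i ≠ ⟨0, hr⟩ ∧ x i ≠ y i := by
        by_contra! h
        refine hx ⟨x ⟨0, hr⟩, by simp, ?_⟩
        funext i
        rcases eq_or_ne i ⟨0, hr⟩ with rfl | hi
        · simp
        · simp [hi, h i hi]
      obtain ⟨i, hi, hxy⟩ := this
      rw [Finset.prod_eq_zero (Finset.mem_univ i), zero_mul]
      simp [hi, hxy]
    · intro b _
      congr 1
      rw [← Finset.mul_prod_erase _ _ (Finset.mem_univ ⟨0, hr⟩), Finset.prod_eq_one]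
      · simp
      · intro i hi
        simp [Finset.ne_of_mem_erase hi]
  rw [site, trace_tensorFam_mul, Finset.sum_comm]
  simp only [key, Matrix.trace, Matrix.diag_apply, Matrix.mul_apply, ptrRest, Matrix.of_apply,
    Finset.mul_sum]
  rw [Finset.sum_comm]
  rw [Finset.sum_congr rfl fun a _ => Finset.sum_comm, Finset.sum_comm]
  refine Finset.sum_congr rfl fun g _ => ?_
  rw [Finset.sum_comm]
  refine Finset.sum_congr rfl fun b _ => ?_
  simp

lemma trace_tensorFam_update_mul (hr : 0 < r)
    {K : Matrix (Fin r → Fin d) (Fin r → Fin d) ℂ}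
    (hsym : ∀ (τ : Equiv.Perm (Fin r)) (x y : Fin r → Fin d), K (x ∘ τ) (y ∘ τ) = K x y)
    (j : Fin r) (c : Matrix (Fin d) (Fin d) ℂ) :
    (tensorFam (Function.update (fun _ : Fin r => ρ) j c) * K).trace =
      (c * firstHoef hr ρ K).trace + ((tensorFam fun _ : Fin r => ρ) * K).trace * c.trace := by
  rw [firstHoef, mul_sub, Matrix.trace_sub, trace_mul_ptrRest, ← mul_assoc, site, tensorFam_mul,
    ← trace_tensorFam_comp_perm_mul hsym _ (Equiv.swap ⟨0, hr⟩ j)]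
  have : (Function.update (fun _ : Fin r => ρ) j c) ∘ (Equiv.swap ⟨0, hr⟩ j) = fun i =>
      Function.update (fun _ => (1 : Matrix (Fin d) (Fin d) ℂ)) ⟨0, hr⟩ c i *
        if i = ⟨0, hr⟩ then 1 else ρ := by
    funext i
    rcases eq_or_ne i ⟨0, hr⟩ with rfl | hi
    · simp
    · have : Equiv.swap ⟨0, hr⟩ j i ≠ j := by
        rw [Ne, Equiv.swap_apply_eq_iff, Equiv.swap_apply_right]
        exact hi
      simp [hi, this]
  rw [this]
  simp

lemma trace_mul_firstHoef (hr : 0 < r) (hρ : ρ.trace = 1)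
    {K : Matrix (Fin r → Fin d) (Fin r → Fin d) ℂ}
    (hsym : ∀ (τ : Equiv.Perm (Fin r)) (x y : Fin r → Fin d), K (x ∘ τ) (y ∘ τ) = K x y) :
    (ρ * firstHoef hr ρ K).trace = 0 := by
  have h := trace_tensorFam_update_mul (ρ := ρ) hr hsym ⟨0, hr⟩ ρ
  rw [Function.update_eq_self_iff.2 rfl, hρ, mul_one] at h
  linear_combination -h

lemma trace_tensorFam_mul_sum_site (N : Fin r → Matrix (Fin d) (Fin d) ℂ)
    (k : Matrix (Fin d) (Fin d) ℂ) :
    (tensorFam N * ∑ j, site j k).trace =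
      ∑ j, (N j * k).trace * ∏ i ∈ Finset.univ.erase j, (N i).trace := by
  rw [Matrix.mul_sum, Matrix.trace_sum]
  refine Finset.sum_congr rfl fun j _ => ?_
  rw [tensorFam_mul_site, trace_tensorFam, ← Finset.mul_prod_erase _ _ (Finset.mem_univ j)]
  congr 1
  · simp
  · refine Finset.prod_congr rfl fun i hi => ?_
    simp [Finset.ne_of_mem_erase hi]

lemma isDegenerate_sum_site {k : Matrix (Fin d) (Fin d) ℂ} (hk : (ρ * k).trace = 0) :
    IsDegenerate ρ 1 (∑ j : Fin r, site j k) := by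
  intro J hJ N hN
  have hJ' : J = ∅ := by simpa using hJ
  subst hJ'
  rw [trace_tensorFam_mul_sum_site]
  refine Finset.sum_eq_zero fun j _ => ?_
  rw [hN j (by simp), hk, zero_mul]

lemma isDegenerate_remainder (hr : 0 < r) (hρ : ρ.trace = 1)
    {K : Matrix (Fin r → Fin d) (Fin r → Fin d) ℂ}
    (hsym : ∀ (τ : Equiv.Perm (Fin r)) (x y : Fin r → Fin d), K (x ∘ τ) (y ∘ τ) = K x y) :
    IsDegenerate ρ 2 (K - ((tensorFam fun _ : Fin r => ρ) * K).trace • 1 -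
      ∑ j : Fin r, site j (firstHoef hr ρ K)) := by
  intro J hJ N hN
  obtain ⟨j, hj⟩ : ∃ j, J ⊆ {j} := by
    rcases J.eq_empty_or_nonempty with rfl | ⟨j, hj⟩
    · exact ⟨⟨0, hr⟩, by simp⟩
    · exact ⟨j, fun i hi => by
        rw [Finset.card_le_one.1 (Nat.lt_succ_iff.1 hJ) i hi j hj]; simp⟩
  have hN' : ∀ i, i ≠ j → N i = ρ := fun i hi => hN i fun h => hi (by simpa using hj h)
  have hNu : N = Function.update (fun _ => ρ) j (N j) := by
    funext i
    rcases eq_or_ne i j with rfl | hi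
    · simp
    · simp [hi, hN' i hi]
  have htr : ∀ l, ∏ i ∈ Finset.univ.erase l, (N i).trace = if l = j then 1 else (N j).trace := by
    intro l
    split_ifs with h
    · subst h
      exact Finset.prod_eq_one fun i hi => by rw [hN' i (Finset.ne_of_mem_erase hi), hρ]
    · rw [Finset.prod_eq_single j]
      · intro i _ hi
        rw [hN' i hi, hρ]
      · intro h'
        exact absurd (Finset.mem_erase.2 ⟨Ne.symm h, Finset.mem_univ _⟩) h'
  have hone : (tensorFam N).trace = (N j).trace := by
    rw [trace_tensorFam, ← Finset.mul_prod_erase _ _ (Finset.mem_univ j), htr, if_pos rfl, mul_one]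
  rw [mul_sub, mul_sub, Matrix.trace_sub, Matrix.trace_sub, trace_tensorFam_mul_sum_site,
    Finset.sum_eq_single j]
  · rw [htr, if_pos rfl, mul_one, Matrix.mul_smul, mul_one, Matrix.trace_smul, hone]
    conv_lhs => rw [hNu]
    rw [trace_tensorFam_update_mul hr hsym]
    simp
  · intro i _ hi
    rw [hN' i hi, trace_mul_firstHoef hr hρ hsym, zero_mul]
  · simp

lemma kernelSum_add (A B : Matrix (Fin r → Fin d) (Fin r → Fin d) ℂ) (n : ℕ) :
    kernelSum (A + B) n = kernelSum A n + kernelSum B n := by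
  simp only [kernelSum, ← amplLin_apply, map_add, smul_add, Finset.sum_add_distrib]

lemma sqrt_smul_qUstat_sub (K : Matrix (Fin r → Fin d) (Fin r → Fin d) ℂ) (θ : ℂ) {n : ℕ}
    (hn : r ≤ n) :
    √n • (qUstat K n - θ • (1 : Matrix (Fin n → Fin d) (Fin n → Fin d) ℂ)) =
      kernelSum (K - θ • 1) n := by
  have hc : (n.choose r : ℂ) ≠ 0 := by exact_mod_cast (Nat.choose_pos hn).ne'
  rw [← Complex.coe_smul, qUstat, ← Finset.univ_eq_attach]
  simp only [kernelSum, ← amplLin_apply, map_sub, map_smul, smul_sub, Finset.sum_sub_distrib]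
  simp only [amplLin_apply, ampl_one, Finset.sum_const, Finset.card_univ, Fintype.card_coe,
    Finset.card_powersetCard, Fintype.card_fin, ← Finset.smul_sum, smul_smul]
  congr 1
  · congr 1
    push_cast
    rw [div_eq_mul_inv]
  · rw [← Nat.cast_smul_eq_nsmul ℂ, smul_smul]
    congr 1
    push_cast
    field_simp

lemma ampl_sum_site {n : ℕ} (k : Matrix (Fin d) (Fin d) ℂ) (β : Finset (Fin n))
    (hβ : β.card = r) : ampl (∑ j, site j k) β hβ = ∑ i ∈ β, site i k := by
  rw [← amplLin_apply, map_sum]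
  conv_rhs => rw [← Finset.image_orderEmbOfFin_univ β hβ]
  rw [Finset.sum_image (β.orderEmbOfFin hβ).injective.injOn]
  refine Finset.sum_congr rfl fun j _ => ?_
  rw [amplLin_apply, site, ampl_tensorFam, site]
  congr 1
  funext i
  by_cases hi : i ∈ β
  · obtain ⟨l, -, rfl⟩ := Finset.mem_image.1
      ((Finset.image_orderEmbOfFin_univ β hβ).symm ▸ hi :
        i ∈ Finset.univ.image (β.orderEmbOfFin hβ))
    rw [extFam_orderEmb]
    simp [Function.update_apply]
  · rw [extFam_of_notMem _ _ _ hi, Function.update_of_ne]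
    rintro rfl
    exact hi (β.orderEmbOfFin_mem hβ j)

lemma kernelSum_sum_site (hr : 0 < r) (k : Matrix (Fin d) (Fin d) ℂ) {n : ℕ} (hn : r ≤ n) :
    kernelSum (∑ j : Fin r, site j k) n = ((r : ℂ) * ((√n : ℝ) : ℂ)⁻¹) • ∑ i, site i k := by
  simp only [kernelSum, ampl_sum_site, ← Finset.smul_sum]
  have hsum : ∑ β : {β // β ∈ Finset.powersetCard r (Finset.univ : Finset (Fin n))},
      ∑ i ∈ β.1, site i k = ((n - 1).choose (r - 1) : ℂ) • ∑ i, site i k := by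
    rw [Finset.sum_coe_sort (Finset.powersetCard r (Finset.univ : Finset (Fin n)))
      fun β => ∑ i ∈ β, site i k,
      Finset.sum_comm' (t' := Finset.univ)
        (s' := fun i => (Finset.powersetCard r Finset.univ).filter ({i} ⊆ ·)) (by simp),
      Finset.smul_sum]
    refine Finset.sum_congr rfl fun i _ => ?_
    rw [Finset.sum_const, Finset.card_filter_powersetCard_subset _ _ _ (by simp) (by simpa),
      ← Nat.cast_smul_eq_nsmul ℂ]
    simp
  rw [hsum, smul_smul]
  congr 1
  have hc : (n.choose r : ℂ) ≠ 0 := by exact_mod_cast (Nat.choose_pos hn).ne'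
  have hs : ((√n : ℝ) : ℂ) ≠ 0 := by
    exact_mod_cast (Real.sqrt_pos.2 (by exact_mod_cast hr.trans_le hn)).ne'
  have hs2 : ((√n : ℝ) : ℂ) ^ 2 = n := by
    exact_mod_cast congrArg Complex.ofReal (Real.sq_sqrt (Nat.cast_nonneg n))
  have hch : (n : ℂ) * (n - 1).choose (r - 1) = n.choose r * r := by
    obtain ⟨n, rfl⟩ := Nat.exists_eq_add_of_le' (hr.trans_le hn)
    obtain ⟨r, rfl⟩ := Nat.exists_eq_add_of_le' hr
    exact_mod_cast Nat.add_one_mul_choose_eq n r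
  push_cast
  field_simp
  rw [hs2]
  linear_combination hch

end Hoeffding

/-- **Convergence of moments of non-degenerate quantum U-statistics to the Gaussian
moments.** -/
theorem stmt15 {d r : ℕ} (hr : 0 < r) (ρ : Matrix (Fin d) (Fin d) ℂ)
    (hρ : ρ.PosDef) (hρtr : ρ.trace = 1)
    (K : Matrix (Fin r → Fin d) (Fin r → Fin d) ℂ)
    (hherm : K.IsHermitian)
    (hsym : ∀ (τ : Equiv.Perm (Fin r)) (x y : Fin r → Fin d), K (x ∘ τ) (y ∘ τ) = K x y)
    (θ : ℂ) (hθ : θ = ((tensorFam fun _ : Fin r => ρ) * K).trace)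
    (ξ₁ : ℂ) (hξ : ξ₁ = (ρ * (firstHoef hr ρ K * firstHoef hr ρ K)).trace)
    (hnondeg : firstHoef hr ρ K ≠ 0) :
    ∀ p : ℕ,
      Tendsto
        (fun n => ((tensorFam fun _ : Fin n => ρ) *
          ((Real.sqrt n) •
            (qUstat K n - θ • (1 : Matrix (Fin n → Fin d) (Fin n → Fin d) ℂ))) ^ p).trace)
        atTop
        (𝓝 (if Even p then ((r : ℂ) ^ 2 * ξ₁) ^ (p / 2) * ((p - 1).doubleFactorial : ℂ)
          else 0)) := by
  intro p
  subst hθ hξ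
  set k := firstHoef hr ρ K with hkdef
  set A : Matrix (Fin r → Fin d) (Fin r → Fin d) ℂ := ∑ j, site j k with hA
  set B := K - ((tensorFam fun _ : Fin r => ρ) * K).trace • 1 - A with hB
  have hk : (ρ * k).trace = 0 := trace_mul_firstHoef hr hρtr hsym
  have hlin := (tendsto_trace_sum_site_pow hρtr hk p).const_mul ((r : ℂ) ^ p)
  have hword : ∀ s : Finset (Fin p), Tendsto (fun n => ((tensorFam fun _ : Fin n => ρ) *
      (List.ofFn fun a => kernelSum (if a ∈ s then A else B) n).prod).trace) atTop
      (𝓝 (if s = Finset.univ then (r : ℂ) ^ p *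
        (if Even p then (ρ * (k * k)).trace ^ (p / 2) * ((p - 1).doubleFactorial : ℂ) else 0)
        else 0)) := by
    intro s
    by_cases hs : s = Finset.univ
    · rw [if_pos hs]
      refine hlin.congr' ?_
      filter_upwards [eventually_ge_atTop r] with n hn
      simp only [hs, Finset.mem_univ, if_true, List.ofFn_const, List.prod_replicate, hA,
        kernelSum_sum_site hr k hn, smul_pow, Matrix.mul_smul, Matrix.trace_smul, smul_eq_mul,
        mul_pow, mul_assoc]
    · rw [if_neg hs]
      refine tendsto_trace_word_zero hρtr (q := fun a => if a ∈ s then 1 else 2) ?_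
        (fun a => if a ∈ s then A else B) fun a => ?_
      · obtain ⟨a, ha⟩ : ∃ a, a ∉ s := by
          by_contra! h
          exact hs (Finset.eq_univ_iff_forall.2 h)
        have h1 : ∑ _i : Fin p, 1 < ∑ i, if i ∈ s then 1 else 2 :=
          Finset.sum_lt_sum (fun i _ => by split_ifs <;> simp) ⟨a, Finset.mem_univ a, by simp [ha]⟩
        simpa using h1
      · by_cases ha : a ∈ s
        · simpa [ha] using isDegenerate_sum_site hk
        · simpa [ha] using isDegenerate_remainder hr hρtr hsym
  have hsum := tendsto_finsetSum Finset.univ fun s _ => hword s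
  rw [Finset.sum_ite_eq' Finset.univ Finset.univ, if_pos (Finset.mem_univ _)] at hsum
  have hlimit : (r : ℂ) ^ p *
      (if Even p then (ρ * (k * k)).trace ^ (p / 2) * ((p - 1).doubleFactorial : ℂ) else 0) =
      if Even p then ((r : ℂ) ^ 2 * (ρ * (k * k)).trace) ^ (p / 2) *
        ((p - 1).doubleFactorial : ℂ) else 0 := by
    split_ifs with hp
    · rw [mul_pow, ← pow_mul, Nat.mul_div_cancel' hp.two_dvd, mul_assoc]
    · rw [mul_zero]
  rw [← hlimit]
  refine hsum.congr' ?_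
  filter_upwards [eventually_ge_atTop r] with n hn
  rw [sqrt_smul_qUstat_sub K _ hn, ← add_sub_cancel A (K - _), ← hB, kernelSum_add,
    ← Matrix.trace_sum, ← Matrix.mul_sum]
  congr 2
  have h := (MultilinearMap.mkPiAlgebraFin ℂ p (Matrix (Fin n → Fin d) (Fin n → Fin d) ℂ)).map_add_univ
    (fun _ => kernelSum A n) (fun _ => kernelSum B n)
  simp only [MultilinearMap.mkPiAlgebraFin_apply, List.ofFn_const,
    List.prod_replicate, Pi.add_def] at h
  rw [h]
  refine Finset.sum_congr rfl fun s _ => ?_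
  congr 2
  funext a
  by_cases ha : a ∈ s <;> simp [ha]
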